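/- arXiv:math/0511114 — 2 statements merged into one kernel-verified Lean document; each statement's English description precedes it below -/
import Mathlib

section
/- For every n ≥ 1, the number of pairs (f,g) of permutations of {1,…,n} satisfying Des(g⁻¹) ⊆ Des(f) equals the number of pairs (f,g) of permutations of {1,…,n} with Des(f) ∩ Des(g) = ∅ (no common descent). -/
/-- The descent set of a permutation `f` of `{1,…,n}` (realized as `Equiv.Perm (Fin n)`
with 1-based positions: position `i` is the index `i-1` of `Fin n`):
`Des f = {i : 1 ≤ i ≤ n-1 and f(i) > f(i+1)}`. -/
def Des {n : ℕ} (f : Equiv.Perm (Fin n)) : Finset ℕ :=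
  (Finset.Ico 1 n).filter fun i =>
    ∃ h : i < n, f ⟨i, h⟩ < f ⟨i - 1, Nat.lt_of_le_of_lt (Nat.sub_le i 1) h⟩

/-!
Reversing the values of `f` turns descents into ascents and vice versa. An inclusion
`Des g⁻¹ ⊆ Des f` says that `Des g⁻¹` is disjoint from the complement of `Des f`, so the bijection
`(f, g) ↦ (w₀ ∘ f, g⁻¹)`, with `w₀` the order-reversing permutation, carries normal pairs to pairs
with no common descent.
-/

section DescentSet

variable {n : ℕ}

lemma Des_subset_Ico (f : Equiv.Perm (Fin n)) : Des f ⊆ Finset.Ico 1 n :=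
  Finset.filter_subset _ _

lemma mem_Des_iff_lt (f : Equiv.Perm (Fin n)) {i : ℕ} (hi : 1 ≤ i) (hin : i < n) :
    i ∈ Des f ↔ f ⟨i, hin⟩ < f ⟨i - 1, (Nat.sub_le i 1).trans_lt hin⟩ := by
  simp only [Des, Finset.mem_filter, Finset.mem_Ico, hi, hin, and_self, true_and, exists_true_left]

lemma mem_Des_revPerm_mul_iff_notMem (f : Equiv.Perm (Fin n)) {i : ℕ} (hi : 1 ≤ i) (hin : i < n) :
    i ∈ Des (Fin.revPerm * f) ↔ i ∉ Des f := by
  have values_ne : f ⟨i - 1, (Nat.sub_le i 1).trans_lt hin⟩ ≠ f ⟨i, hin⟩ :=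
    f.injective.ne (Fin.ne_of_lt (Nat.sub_one_lt_of_lt hi))
  rw [mem_Des_iff_lt _ hi hin, mem_Des_iff_lt _ hi hin, Equiv.Perm.mul_apply, Equiv.Perm.mul_apply,
    Fin.revPerm_apply, Fin.revPerm_apply, Fin.rev_lt_rev, not_lt, values_ne.le_iff_lt]

lemma Des_revPerm_mul (f : Equiv.Perm (Fin n)) :
    Des (Fin.revPerm * f) = Finset.Ico 1 n \ Des f := by
  ext i
  by_cases hi : i ∈ Finset.Ico 1 n
  · obtain ⟨one_le, lt_n⟩ := Finset.mem_Ico.mp hi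
    rw [Finset.mem_sdiff, mem_Des_revPerm_mul_iff_notMem f one_le lt_n, and_iff_right hi]
  · exact iff_of_false (fun h => hi (Des_subset_Ico _ h)) fun h => hi (Finset.mem_sdiff.mp h).1

lemma Des_subset_Des_iff_disjoint (f g : Equiv.Perm (Fin n)) :
    Des g ⊆ Des f ↔ Disjoint (Des (Fin.revPerm * f)) (Des g) := by
  rw [Des_revPerm_mul, disjoint_comm]
  exact (disjoint_sdiff_iff_le (Des_subset_Ico g) (Des_subset_Ico f)).symm

end DescentSet

/-- The number of normal pairs `(f, g)` of permutations of `{1,…,n}`,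
i.e. pairs with `Des (g⁻¹) ⊆ Des f`, equals the number of pairs of permutations
with no common descent. -/
theorem card_normal_pairs_eq_card_no_common_descent (n : ℕ) (hn : 1 ≤ n) :
    Nat.card {p : Equiv.Perm (Fin n) × Equiv.Perm (Fin n) // Des p.2⁻¹ ⊆ Des p.1} =
      Nat.card {p : Equiv.Perm (Fin n) × Equiv.Perm (Fin n) // Des p.1 ∩ Des p.2 = ∅} :=
  Nat.card_congr <| Equiv.subtypeEquiv
    ((Equiv.mulLeft Fin.revPerm).prodCongr (Equiv.inv (Equiv.Perm (Fin n)))) fun ⟨f, g⟩ =>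
      (Des_subset_Des_iff_disjoint f g⁻¹).trans Finset.disjoint_iff_inter_eq_empty
end

section
/- Let n ≥ 1, let I, J ⊆ {1,…,n−1}, and let (q_1,…,q_ℓ) be the n-composition of J. Then the number of permutations f of {1,…,n} satisfying Des(f⁻¹) = I and Des(f) ⊇ J equals the number of functions φ : {1,…,n} → {1,…,ℓ} such that #φ⁻¹(j) = q_j for every j ∈ {1,…,ℓ} and such that, for every i ∈ {1,…,n−1}, one has i ∈ I if and only if φ(i) ≥ φ(i+1). -/
/-- The `n`-composition of a subset `I` of `{1,…,n-1}`: the list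
`(p₁, p₂ - p₁, …, p_k - p_{k-1})` where `p₁ < p₂ < … < p_k` is the increasing
enumeration of `{1,…,n} \ I`. -/
def ncomp (n : ℕ) (I : Finset ℕ) : List ℕ :=
  let P := ((Finset.Icc 1 n) \ I).sort (· ≤ ·)
  List.zipWith (· - ·) P (0 :: P)

open Finset

section Fibers

variable {α β γ : Type*}

theorem strictAntiOn_fibers_iff [LinearOrder α] [SuccOrder α] [IsSuccArchimedean α]
    [PartialOrder β] [Preorder γ] {b : α → β} (hb : Monotone b) {f : α → γ} :
    (∀ j, StrictAntiOn f (b ⁻¹' {j})) ↔ ∀ x y, x ⋖ y → b x = b y → f y < f x := by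
  refine ⟨fun h x y hxy hbxy => h (b y) hbxy rfl hxy.lt, fun h j => ?_⟩
  refine strictAntiOn_of_succ_lt (Set.ordConnected_singleton.preimage_mono hb)
    fun x hx hxj hsj => ?_
  exact h x _ (Order.covBy_succ_of_not_isMax hx) (hxj.trans hsj.symm)

theorem symm_lt_symm_iff_of_strictAntiOn_fibers [LinearOrder α] [PartialOrder β] [Preorder γ]
    {b : α → β} (hb : Monotone b) {f : α ≃ γ} (hf : ∀ j, StrictAntiOn f (b ⁻¹' {j}))
    {x y : γ} (hxy : x < y) : f.symm y < f.symm x ↔ b (f.symm y) ≤ b (f.symm x) := by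
  refine ⟨fun h => hb h.le, fun h => lt_of_not_ge fun hle => ?_⟩
  have hb_eq : b (f.symm x) = b (f.symm y) := (hb hle).antisymm h
  have hlt : f.symm x < f.symm y := hle.lt_of_ne (f.symm.injective.ne hxy.ne)
  have hyx : y < x := by simpa using hf _ hb_eq rfl hlt
  exact hxy.asymm hyx

theorem exists_perm_comp_eq_of_card_fiber_eq [Finite α] {φ b : α → β}
    (h : ∀ j, Nat.card {x // φ x = j} = Nat.card {x // b x = j}) :
    ∃ e : Equiv.Perm α, φ ∘ e = b :=
  ⟨Equiv.ofFiberEquiv fun j => (Finite.card_eq.1 (h j).symm).some,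
    funext (Equiv.ofFiberEquiv_map _)⟩

end Fibers

section SortTiesDesc

variable {n : ℕ} {β : Type*} [LinearOrder β]

/-- The permutation listing `Fin n` by increasing value of `φ`, ties being listed in decreasing
order. It is obtained by reversing the stable sort of `φ` for the dual order. -/
def sortTiesDesc (φ : Fin n → β) : Equiv.Perm (Fin n) :=
  Fin.revPerm.trans (Tuple.sort (OrderDual.toDual ∘ φ))

theorem eq_sortTiesDesc_iff {φ : Fin n → β} {f : Equiv.Perm (Fin n)} :
    f = sortTiesDesc φ ↔ Monotone (φ ∘ f) ∧ ∀ j, StrictAntiOn f (φ ∘ f ⁻¹' {j}) := by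
  have hrev : f = sortTiesDesc φ ↔ Fin.revPerm.trans f = Tuple.sort (OrderDual.toDual ∘ φ) := by
    constructor
    · rintro rfl
      ext x
      simp [sortTiesDesc]
    · intro h
      ext x
      simp [sortTiesDesc, ← h]
  rw [hrev, Tuple.eq_sort_iff]
  refine and_congr ⟨fun h x y hxy => ?_, fun h x y hxy => h (Fin.rev_le_rev.2 hxy)⟩
    ⟨fun h j x hx y hy hxy => ?_, fun h x y hxy hφ =>
      h _ hφ.symm rfl (Fin.rev_lt_rev.2 hxy)⟩
  · simpa using h (Fin.rev_le_rev.2 hxy)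
  · have hφ : φ (f x) = φ (f y) := hx.trans hy.symm
    simpa [hφ] using h _ _ (Fin.rev_lt_rev.2 hxy)

theorem comp_sortTiesDesc_eq {b φ : Fin n → β} (hb : Monotone b)
    (h : ∀ j, Nat.card {x // φ x = j} = Nat.card {x // b x = j}) :
    φ ∘ sortTiesDesc φ = b := by
  obtain ⟨e, rfl⟩ := exists_perm_comp_eq_of_card_fiber_eq h
  exact Tuple.unique_monotone (eq_sortTiesDesc_iff.1 rfl).1 hb

/-- Permutations that decrease on the fibres of a monotone `b` correspond to the rearrangements of
`b`, described by their fibre sizes, via `f ↦ b ∘ f⁻¹`. -/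
def permEquivRearrangement {b : Fin n → β} (hb : Monotone b) :
    {f : Equiv.Perm (Fin n) // ∀ j, StrictAntiOn f (b ⁻¹' {j})} ≃
      {φ : Fin n → β // ∀ j, Nat.card {x // φ x = j} = Nat.card {x // b x = j}} where
  toFun f := ⟨b ∘ f.1.symm, fun _ => Nat.card_congr (f.1.symm.subtypeEquiv fun _ => Iff.rfl)⟩
  invFun φ := ⟨sortTiesDesc φ.1, by
    have hsort := (eq_sortTiesDesc_iff (φ := φ.1).1 rfl).2
    rwa [comp_sortTiesDesc_eq hb φ.2] at hsort⟩
  left_inv f := by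
    refine Subtype.ext (eq_sortTiesDesc_iff.2 ?_).symm
    simpa [Function.comp_assoc] using ⟨hb, f.2⟩
  right_inv φ := Subtype.ext ((Equiv.comp_symm_eq _ _ _).2 (comp_sortTiesDesc_eq hb φ.2).symm)

theorem card_strictAntiOn_fibers_eq_card_rearrangement {b : Fin n → β} (hb : Monotone b)
    {P : Equiv.Perm (Fin n) → Prop} {Q : (Fin n → β) → Prop}
    (hPQ : ∀ f : Equiv.Perm (Fin n), (∀ j, StrictAntiOn f (b ⁻¹' {j})) → (P f ↔ Q (b ∘ f.symm))) :
    Nat.card {f : Equiv.Perm (Fin n) // (∀ j, StrictAntiOn f (b ⁻¹' {j})) ∧ P f} =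
      Nat.card {φ : Fin n → β //
        (∀ j, Nat.card {x // φ x = j} = Nat.card {x // b x = j}) ∧ Q φ} :=
  Nat.card_congr <| (Equiv.subtypeSubtypeEquivSubtypeInter _ P).symm.trans <|
    ((permEquivRearrangement hb).subtypeEquiv fun f => hPQ f f.2).trans <|
      Equiv.subtypeSubtypeEquivSubtypeInter _ Q

end SortTiesDesc

section Des

variable {n : ℕ} {f : Equiv.Perm (Fin n)} {K : Finset ℕ}

theorem fin_mk_pred_covBy_mk {i : ℕ} (h1 : 1 ≤ i) (h2 : i < n) :
    (⟨i - 1, Nat.lt_of_le_of_lt (Nat.sub_le i 1) h2⟩ : Fin n) ⋖ ⟨i, h2⟩ := by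
  rw [Fin.covBy_iff, Nat.covBy_iff_add_one_eq]
  exact Nat.sub_add_cancel h1

theorem forall_fin_covBy_iff {P : Fin n → Fin n → Prop} :
    (∀ x y, x ⋖ y → P x y) ↔
      ∀ i : ℕ, 1 ≤ i → ∀ h2 : i < n,
        P ⟨i - 1, Nat.lt_of_le_of_lt (Nat.sub_le i 1) h2⟩ ⟨i, h2⟩ := by
  refine ⟨fun h i h1 h2 => h _ _ (fin_mk_pred_covBy_mk h1 h2), fun h x y hxy => ?_⟩
  rw [Fin.covBy_iff, Nat.covBy_iff_add_one_eq] at hxy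
  have hx : (⟨y - 1, by omega⟩ : Fin n) = x := Fin.ext (by simp [← hxy])
  exact hx ▸ h y (by omega) y.2

theorem mem_Des_iff_of_covBy {x y : Fin n} (hxy : x ⋖ y) : (y : ℕ) ∈ Des f ↔ f y < f x := by
  revert hxy
  refine forall_fin_covBy_iff (P := fun x y => (y : ℕ) ∈ Des f ↔ f y < f x).2
    (fun i h1 h2 => ?_) x y
  simp only [Des, mem_filter, mem_Ico, h1, h2, and_self, true_and, exists_true_left]

theorem exists_covBy_of_mem_Icc {i : ℕ} (hi : i ∈ Icc 1 (n - 1)) :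
    ∃ x y : Fin n, x ⋖ y ∧ (y : ℕ) = i := by
  obtain ⟨h1, h2⟩ := mem_Icc.1 hi
  exact ⟨_, _, fin_mk_pred_covBy_mk h1 (by omega), rfl⟩

theorem subset_Des_iff (hK : K ⊆ Icc 1 (n - 1)) :
    K ⊆ Des f ↔ ∀ x y : Fin n, x ⋖ y → (y : ℕ) ∈ K → f y < f x := by
  refine ⟨fun h x y hxy hy => (mem_Des_iff_of_covBy hxy).1 (h hy), fun h i hi => ?_⟩
  obtain ⟨x, y, hxy, rfl⟩ := exists_covBy_of_mem_Icc (hK hi)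
  exact (mem_Des_iff_of_covBy hxy).2 (h x y hxy hi)

theorem Des_subset_Icc : Des f ⊆ Icc 1 (n - 1) := fun i hi => by
  have := mem_Ico.1 (mem_filter.1 hi).1
  exact mem_Icc.2 (by omega)

theorem Des_eq_iff (hK : K ⊆ Icc 1 (n - 1)) :
    Des f = K ↔ ∀ x y : Fin n, x ⋖ y → ((y : ℕ) ∈ K ↔ f y < f x) := by
  refine ⟨fun h x y hxy => h ▸ mem_Des_iff_of_covBy hxy, fun h => ?_⟩
  refine Subset.antisymm (fun i hi => ?_) ((subset_Des_iff hK).2 fun x y hxy => (h x y hxy).1)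
  obtain ⟨x, y, hxy, rfl⟩ := exists_covBy_of_mem_Icc (Des_subset_Icc hi)
  exact (h x y hxy).2 ((mem_Des_iff_of_covBy hxy).1 hi)

theorem Des_inv_eq_iff_of_strictAntiOn_fibers {β : Type*} [PartialOrder β] {b : Fin n → β}
    (hb : Monotone b) (hf : ∀ j, StrictAntiOn f (b ⁻¹' {j})) (hK : K ⊆ Icc 1 (n - 1)) :
    Des f⁻¹ = K ↔ ∀ i : ℕ, 1 ≤ i → ∀ h2 : i < n,
      (i ∈ K ↔ b (f.symm ⟨i, h2⟩) ≤
        b (f.symm ⟨i - 1, Nat.lt_of_le_of_lt (Nat.sub_le i 1) h2⟩)) := by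
  rw [Des_eq_iff hK,
    ← forall_fin_covBy_iff (P := fun x y => (y : ℕ) ∈ K ↔ b (f.symm y) ≤ b (f.symm x))]
  refine forall₃_congr fun x y hxy => ?_
  rw [← symm_lt_symm_iff_of_strictAntiOn_fibers hb hf hxy.lt, Equiv.Perm.inv_def]

end Des

section Enumeration

variable {S : Finset ℕ} {k x : ℕ}

theorem getElem_sort_le_iff (hk : k < S.sort.length) :
    S.sort[k] ≤ x ↔ k < Nat.count (· ∈ S) (x + 1) := by
  have hfin : (Set.ofPred (· ∈ S)).Finite := S.finite_toSet
  have hS : hfin.toFinset = S := by ext; simp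
  have hcard : k < #hfin.toFinset := by simpa [hS] using hk
  have hnth : Nat.nth (· ∈ S) k = S.sort[k] := by
    rw [Nat.nth_eq_getD_sort hfin, hS, List.getD_eq_getElem _ _ hk]
  rw [← hnth, ← Nat.lt_succ_iff]
  refine ⟨fun h => ?_, Nat.nth_lt_of_lt_count⟩
  calc k = Nat.count (· ∈ S) (Nat.nth (· ∈ S) k) :=
        (Nat.count_nth_of_lt_card_finite hfin hcard).symm
    _ < Nat.count (· ∈ S) (x + 1) := Nat.count_strict_mono (Nat.nth_mem_of_lt_card hfin hcard) h

theorem getElem_zero_cons_sort_le_iff (hk : k < (0 :: S.sort).length) :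
    (0 :: S.sort)[k] ≤ x ↔ k ≤ Nat.count (· ∈ S) (x + 1) := by
  cases k with
  | zero => simp
  | succ k =>
    rw [List.getElem_cons_succ, Nat.succ_le_iff]
    exact getElem_sort_le_iff _

theorem count_mem_lt_card (hx : x ∈ S) : Nat.count (· ∈ S) x < #S := by
  rw [Nat.count_eq_card_filter_range]
  refine card_lt_card ⟨fun y hy => (mem_filter.1 hy).2, fun h => ?_⟩
  exact (mem_range.1 (mem_filter.1 (h hx)).1).false

end Enumeration

section BlockIndex

variable {n : ℕ} {J : Finset ℕ}

theorem length_ncomp : (ncomp n J).length = #(Icc 1 n \ J) := by simp [ncomp]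

theorem count_lt_length_ncomp (hJ : J ⊆ Icc 1 (n - 1)) (x : Fin n) :
    Nat.count (· ∈ Icc 1 n \ J) (x + 1) < (ncomp n J).length := by
  have hnJ : n ∉ J := fun h => by
    have := mem_Icc.1 (hJ h)
    omega
  have hn : n ∈ Icc 1 n \ J := mem_sdiff.2 ⟨mem_Icc.2 ⟨x.pos, le_rfl⟩, hnJ⟩
  calc Nat.count (· ∈ Icc 1 n \ J) (x + 1) ≤ Nat.count (· ∈ Icc 1 n \ J) n :=
        Nat.count_monotone _ x.2
    _ < #(Icc 1 n \ J) := count_mem_lt_card hn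
    _ = (ncomp n J).length := length_ncomp.symm

/-- The index of the block of the position `x + 1` in the division of `{1,…,n}` into consecutive
blocks ending at the elements outside `J`: the number of blocks that end before this position. -/
def blockIndex (hJ : J ⊆ Icc 1 (n - 1)) (x : Fin n) : Fin (ncomp n J).length :=
  ⟨Nat.count (· ∈ Icc 1 n \ J) (x + 1), count_lt_length_ncomp hJ x⟩

theorem monotone_blockIndex (hJ : J ⊆ Icc 1 (n - 1)) : Monotone (blockIndex hJ) :=
  fun _ _ hxy => Nat.count_monotone _ (Nat.succ_le_succ hxy)

theorem blockIndex_eq_iff_of_covBy (hJ : J ⊆ Icc 1 (n - 1)) {x y : Fin n} (hxy : x ⋖ y) :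
    blockIndex hJ x = blockIndex hJ y ↔ (y : ℕ) ∈ J := by
  rw [Fin.covBy_iff, Nat.covBy_iff_add_one_eq] at hxy
  have hy : (y : ℕ) ∈ Icc 1 n := mem_Icc.2 ⟨by omega, y.2.le⟩
  simp only [blockIndex, hxy, Fin.mk.injEq, Nat.count_succ _ (y : ℕ), mem_sdiff, hy, true_and,
    left_eq_add, ite_eq_right_iff, one_ne_zero, imp_false, not_not]

theorem card_blockIndex_fiber (hJ : J ⊆ Icc 1 (n - 1)) (j : Fin (ncomp n J).length) :
    Nat.card {x // blockIndex hJ x = j} = (ncomp n J).get j := by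
  set P := (Icc 1 n \ J).sort with hP
  have hj : (j : ℕ) < P.length := by simpa [hP, length_ncomp] using j.2
  have hj' : (j : ℕ) < (0 :: P).length := by rw [List.length_cons]; omega
  have hle : P[(j : ℕ)] ≤ n := by
    have hmem : P[(j : ℕ)] ∈ Icc 1 n \ J := (mem_sort _).1 (List.getElem_mem hj)
    exact (mem_Icc.1 (mem_sdiff.1 hmem).1).2
  -- `(0 :: P)[j]` and `P[j]` are the last elements of the blocks `j - 1` and `j`.
  have hfiber (x : Fin n) : blockIndex hJ x = j ↔ (0 :: P)[(j : ℕ)] ≤ x ∧ x < P[(j : ℕ)] := by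
    rw [getElem_zero_cons_sort_le_iff, ← not_le, getElem_sort_le_iff, not_lt, and_comm,
      ← le_antisymm_iff, Fin.ext_iff, blockIndex]
  calc Nat.card {x // blockIndex hJ x = j}
      = #((Ico (0 :: P)[(j : ℕ)] P[(j : ℕ)]).attachFin fun _ hx => (mem_Ico.1 hx).2.trans_le hle) :=
        Nat.subtype_card _ fun x => by simp [hfiber]
    _ = P[(j : ℕ)] - (0 :: P)[(j : ℕ)] := by rw [card_attachFin, Nat.card_Ico]
    _ = (ncomp n J).get j := (List.getElem_zipWith (h := j.2)).symm

theorem subset_Des_iff_strictAntiOn_blocks (hJ : J ⊆ Icc 1 (n - 1)) {f : Equiv.Perm (Fin n)} :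
    J ⊆ Des f ↔ ∀ j, StrictAntiOn f (blockIndex hJ ⁻¹' {j}) := by
  rw [subset_Des_iff hJ, strictAntiOn_fibers_iff (monotone_blockIndex hJ)]
  refine forall₃_congr fun x y hxy => ?_
  rw [blockIndex_eq_iff_of_covBy hJ hxy]

end BlockIndex

/-- The number of permutations `f` of `{1,…,n}` with `Des (f⁻¹) = I` and `Des f ⊇ J`
equals the number of functions `φ : {1,…,n} → {1,…,ℓ}` whose fibre over `j` has
`q_j` elements and such that, for `1 ≤ i ≤ n-1`, one has `i ∈ I` iff `φ(i) ≥ φ(i+1)`;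
here `(q₁,…,q_ℓ)` is the `n`-composition of `J` (positions are 1-based, so position
`i` is index `i-1` of `Fin n`). -/
theorem card_descents_eq_card_functions (n : ℕ) (hn : 1 ≤ n)
    (I J : Finset ℕ) (hI : I ⊆ Finset.Icc 1 (n - 1)) (hJ : J ⊆ Finset.Icc 1 (n - 1)) :
    Nat.card {f : Equiv.Perm (Fin n) // Des f⁻¹ = I ∧ J ⊆ Des f} =
      Nat.card {φ : Fin n → Fin (ncomp n J).length //
        (∀ j, Nat.card {x : Fin n // φ x = j} = (ncomp n J).get j) ∧
        (∀ i : ℕ, ∀ h1 : 1 ≤ i, ∀ h2 : i < n,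
          (i ∈ I ↔ φ ⟨i, h2⟩ ≤ φ ⟨i - 1, Nat.lt_of_le_of_lt (Nat.sub_le i 1) h2⟩))} := by
  have hb : Monotone (blockIndex hJ) := monotone_blockIndex hJ
  calc Nat.card {f : Equiv.Perm (Fin n) // Des f⁻¹ = I ∧ J ⊆ Des f}
      = Nat.card {f : Equiv.Perm (Fin n) //
          (∀ j, StrictAntiOn f (blockIndex hJ ⁻¹' {j})) ∧ Des f⁻¹ = I} := by
        simp only [subset_Des_iff_strictAntiOn_blocks hJ, and_comm]
    _ = _ := by
        simp only [← card_blockIndex_fiber hJ]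
        exact card_strictAntiOn_fibers_eq_card_rearrangement hb fun f hf =>
          Des_inv_eq_iff_of_strictAntiOn_fibers hb hf hI
end
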